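/- Let m and ℓ be positive integers. Every periodic element of G(m,ℓ) is conjugate either to an integer power of s(0,m) = a_0 a_1 ⋯ a_{m−1} or to an integer power of Δ. -/

import Mathlib

/-- The word `a_i a_{i+1} ⋯ a_{i+p-1}` (indices mod `m`) in the free group on `ZMod m`. -/
def circWord (m : ℕ) (i : ZMod m) (p : ℕ) : FreeGroup (ZMod m) :=
  ((List.range p).map (fun k => FreeGroup.of (i + (k : ZMod m)))).prod

/-- The defining relations of the circular group `G(m,ℓ)`. -/
def circRels (m ℓ : ℕ) : Set (FreeGroup (ZMod m)) :=
  { r | ∃ i : ZMod m, r = circWord m i ℓ * (circWord m (i + 1) ℓ)⁻¹ }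

/-- The circular group `G(m,ℓ)`. -/
abbrev CircularGroup (m ℓ : ℕ) := PresentedGroup (circRels m ℓ)

/-- The generator `a_i` of the circular group `G(m,ℓ)`. -/
def circGen (m ℓ : ℕ) (i : ZMod m) : CircularGroup m ℓ :=
  PresentedGroup.of i

/-- The element `s(i,p) = a_i a_{i+1} ⋯ a_{i+p-1}` of the circular group `G(m,ℓ)`. -/
def circS (m ℓ : ℕ) (i : ZMod m) (p : ℕ) : CircularGroup m ℓ :=
  ((List.range p).map (fun k => circGen m ℓ (i + (k : ZMod m)))).prod

/-- The Garside element `Δ = s(0,ℓ)` of the circular group `G(m,ℓ)`. -/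
def circDelta (m ℓ : ℕ) : CircularGroup m ℓ := circS m ℓ 0 ℓ

/-- An element `x` of `G(m,ℓ)` is *periodic* if `x^a = Δ^b` for some nonzero
integer `a` and some integer `b`. -/
def CircIsPeriodic (m ℓ : ℕ) (x : CircularGroup m ℓ) : Prop :=
  ∃ a : ℤ, a ≠ 0 ∧ ∃ b : ℤ, x ^ a = (circDelta m ℓ) ^ b

namespace Monoid.CoprodI

variable {ι : Type*} {M : ι → Type*} [∀ i, Group (M i)]

/-- The element of a free product spelled by a list of letters, not necessarily reduced. -/
def listProd (L : List (Σ i, M i)) : CoprodI M := (L.map fun l => of l.2).prod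

theorem exists_shorter_or_reduced (L : List (Σ i, M i)) :
    (∃ L' : List (Σ i, M i), L'.length < L.length ∧ listProd L' = listProd L) ∨
      ((∀ l ∈ L, l.2 ≠ 1) ∧ L.IsChain fun l l' => l.1 ≠ l'.1) := by
  classical
  induction L with
  | nil => simp
  | cons x L ih =>
    rcases ih with ⟨L', hlen, hprod⟩ | ⟨hne, hchain⟩
    · refine Or.inl ⟨x :: L', by simpa using hlen, ?_⟩
      simp only [listProd] at hprod ⊢
      simp [hprod]
    by_cases hx : x.2 = 1
    · exact Or.inl ⟨L, by simp, by simp [listProd, hx]⟩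
    cases L with
    | nil => exact Or.inr (by simpa using hx)
    | cons y L =>
      obtain ⟨i, g⟩ := x
      obtain ⟨j, h⟩ := y
      by_cases hij : i = j
      · subst hij
        exact Or.inl ⟨⟨i, g * h⟩ :: L, by simp, by simp [listProd, mul_assoc]⟩
      · refine Or.inr ⟨?_, List.isChain_cons_cons.2 ⟨hij, hchain⟩⟩
        intro l hl
        rcases List.mem_cons.1 hl with rfl | hl
        exacts [hx, hne l hl]

theorem NeWord.prod_ne_one {i j : ι} (w : NeWord M i j) : w.prod ≠ 1 := by
  classical
  intro h
  have hw : w.toWord = Word.empty :=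
    Word.equiv.symm.injective (show w.toWord.prod = Word.empty.prod by simpa [NeWord.prod] using h)
  exact w.toList_ne_nil (congrArg Word.toList hw)

theorem NeWord.exists_prod_eq_pow {i j : ι} (w : NeWord M i j) (hij : i ≠ j) (n : ℕ) :
    ∃ w' : NeWord M i j, w'.prod = w.prod ^ (n + 1) := by
  induction n with
  | zero => exact ⟨w, by simp⟩
  | succ n ih =>
    obtain ⟨w', hw'⟩ := ih
    exact ⟨w'.append hij.symm w, by rw [NeWord.append_prod, hw', pow_succ _ (n + 1)]⟩

/-- A torsion element of a free product is conjugate into one of the factors. -/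
theorem exists_isConj_of_isOfFinOrder [Nonempty ι] {x : CoprodI M} (hx : IsOfFinOrder x) :
    ∃ (i : ι) (g : M i), IsConj x (of g) := by
  classical
  have key : ∀ (n : ℕ) (L : List (Σ i, M i)), L.length = n → IsOfFinOrder (listProd L) →
      ∃ (i : ι) (g : M i), IsConj (listProd L) (of g) := by
    intro n
    induction n using Nat.strong_induction_on with
    | _ n ih =>
      intro L hL hfin
      rcases exists_shorter_or_reduced L with ⟨L', hlen, hprod⟩ | ⟨hne, hchain⟩
      · rw [← hprod] at hfin ⊢
        exact ih _ (hL ▸ hlen) L' rfl hfin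
      rcases eq_or_ne L [] with rfl | hnil
      · exact ⟨Classical.arbitrary ι, 1, by simp [listProd]⟩
      obtain ⟨i, j, w, hw⟩ := NeWord.of_word ⟨L, hne, hchain⟩
        (fun h => hnil (congrArg Word.toList h))
      have hwL : w.toList = L := congrArg Word.toList hw
      have hwprod : w.prod = listProd L := congrArg Word.prod hw
      by_cases hij : i = j
      · subst hij
        have hhead := w.toList_head?
        have hlast := w.toList_getLast?
        rw [hwL] at hhead hlast
        cases L with
        | nil => exact absurd rfl hnil
        | cons a L =>
          obtain rfl : a = ⟨i, w.head⟩ := by simpa using hhead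
          rcases List.eq_nil_or_concat L with rfl | ⟨N, b, rfl⟩
          · exact ⟨i, w.head, by rw [show listProd [⟨i, w.head⟩] = of w.head by simp [listProd]]⟩
          obtain rfl : b = ⟨i, w.last⟩ := by
            rw [List.concat_eq_append, ← List.cons_append] at hlast
            simpa only [List.getLast?_concat, Option.some.injEq] using hlast
          have hconj : IsConj (listProd (⟨i, w.head⟩ :: N.concat ⟨i, w.last⟩))
              (listProd (N.concat ⟨i, w.last * w.head⟩)) := by
            rw [isConj_iff]
            exact ⟨(of w.head)⁻¹, by simp [listProd, mul_assoc]⟩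
          obtain ⟨c, hc⟩ := isConj_iff.1 hconj
          obtain ⟨k, g, hg⟩ := ih (N.length + 1) (by simp [← hL]) (N.concat ⟨i, w.last * w.head⟩)
            (by simp) (by
              rw [← hc]
              exact (MulAut.conj c).toMonoidHom.isOfFinOrder hfin)
          exact ⟨k, g, hconj.trans hg⟩
      · obtain ⟨n, hn, hpow⟩ := isOfFinOrder_iff_pow_eq_one.1 hfin
        obtain ⟨w', hw'⟩ := w.exists_prod_eq_pow hij (n - 1)
        rw [Nat.sub_add_cancel hn, hwprod, hpow] at hw'
        exact absurd hw' w'.prod_ne_one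
  have hword : listProd (Word.equiv x).toList = x := Word.equiv.symm_apply_apply x
  have h := key _ (Word.equiv x).toList rfl
  rw [hword] at h
  exact h hx

end Monoid.CoprodI

section Circular

variable {m ℓ : ℕ}

theorem circS_zero (i : ZMod m) : circS m ℓ i 0 = 1 := rfl

theorem circS_succ (i : ZMod m) (p : ℕ) :
    circS m ℓ i (p + 1) = circS m ℓ i p * circGen m ℓ (i + p) := by
  simp [circS, List.range_succ]

theorem circS_add (i : ZMod m) (p q : ℕ) :
    circS m ℓ i (p + q) = circS m ℓ i p * circS m ℓ (i + p) q := by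
  induction q with
  | zero => simp [circS_zero]
  | succ q ih =>
    rw [← add_assoc, circS_succ, ih, circS_succ, mul_assoc]
    push_cast
    rw [add_assoc]

theorem circWord_eq_prod (i : ZMod m) (p : ℕ) :
    circWord m i p = ((List.range p).map fun k : ℕ => FreeGroup.of (i + (k : ZMod m))).prod := by
  simp [circWord, ← List.map_eq_flatMap, Function.comp_def]

theorem circS_eq_mk_circWord (i : ZMod m) (p : ℕ) :
    circS m ℓ i p = PresentedGroup.mk (circRels m ℓ) (circWord m i p) := by
  rw [circS, circWord, map_list_prod, List.map_map]
  rfl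

theorem circS_succ_index (i : ZMod m) : circS m ℓ (i + 1) ℓ = circS m ℓ i ℓ := by
  have h : PresentedGroup.mk (circRels m ℓ) (circWord m i ℓ * (circWord m (i + 1) ℓ)⁻¹) = 1 :=
    PresentedGroup.one_of_mem ⟨i, rfl⟩
  rw [map_mul, map_inv, ← circS_eq_mk_circWord, ← circS_eq_mk_circWord] at h
  exact (mul_inv_eq_one.1 h).symm

theorem circS_natCast_eq_circDelta (k : ℕ) : circS m ℓ (k : ZMod m) ℓ = circDelta m ℓ := by
  induction k with
  | zero => simp [circDelta]
  | succ k ih => rw [Nat.cast_succ, circS_succ_index, ih]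

theorem circS_mul_circDelta (p : ℕ) :
    circS m ℓ 0 (p + ℓ) = circS m ℓ 0 p * circDelta m ℓ := by
  rw [circS_add, zero_add, circS_natCast_eq_circDelta]

theorem circS_add_period (p : ℕ) : circS m ℓ 0 (p + m) = circS m ℓ 0 m * circS m ℓ 0 p := by
  rw [add_comm, circS_add]
  simp

theorem circDelta_pow (k : ℕ) : circDelta m ℓ ^ k = circS m ℓ 0 (ℓ * k) := by
  induction k with
  | zero => simp [circS_zero]
  | succ k ih => rw [pow_succ, ih, Nat.mul_succ, circS_mul_circDelta]

theorem circS_period_pow (k : ℕ) : circS m ℓ 0 m ^ k = circS m ℓ 0 (m * k) := by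
  induction k with
  | zero => simp [circS_zero]
  | succ k ih => rw [pow_succ', ih, Nat.mul_succ, circS_add_period]

theorem circS_period_pow_eq_circDelta_pow :
    circS m ℓ 0 m ^ (ℓ / ℓ.gcd m) = circDelta m ℓ ^ (m / ℓ.gcd m) := by
  rw [circDelta_pow, circS_period_pow, ← Nat.mul_div_assoc _ (Nat.gcd_dvd_left ℓ m),
    ← Nat.mul_div_assoc _ (Nat.gcd_dvd_right ℓ m), mul_comm]

theorem circGen_mul_circDelta [NeZero m] (i : ZMod m) :
    circGen m ℓ i * circDelta m ℓ = circDelta m ℓ * circGen m ℓ (i + ℓ) := by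
  have hΔ (j : ZMod m) : circS m ℓ j ℓ = circDelta m ℓ := by
    rw [← ZMod.natCast_zmod_val j, circS_natCast_eq_circDelta]
  calc circGen m ℓ i * circDelta m ℓ = circS m ℓ i (1 + ℓ) := by
        rw [circS_add, hΔ, circS_succ, circS_zero]
        simp
    _ = circDelta m ℓ * circGen m ℓ (i + ℓ) := by rw [add_comm, circS_succ, hΔ]

theorem circGen_mul_circDelta_pow [NeZero m] (i : ZMod m) (k : ℕ) :
    circGen m ℓ i * circDelta m ℓ ^ k = circDelta m ℓ ^ k * circGen m ℓ (i + (ℓ * k : ℕ)) := by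
  induction k with
  | zero => simp
  | succ k ih =>
    rw [pow_succ, ← mul_assoc, ih, mul_assoc, circGen_mul_circDelta, Nat.mul_succ, mul_assoc]
    push_cast
    rw [add_assoc]

theorem commute_circDelta_pow [NeZero m] (g : CircularGroup m ℓ) :
    Commute g (circDelta m ℓ ^ (m / ℓ.gcd m)) := by
  have hg : g ∈ Subgroup.closure (Set.range (circGen m ℓ)) := by
    rw [show Set.range (circGen m ℓ) = Set.range PresentedGroup.of from rfl,
      PresentedGroup.closure_range_of]
    trivial
  induction hg using Subgroup.closure_induction with
  | mem x hx =>
    obtain ⟨i, rfl⟩ := hx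
    have h : ((ℓ * (m / ℓ.gcd m) : ℕ) : ZMod m) = 0 := by
      rw [ZMod.natCast_eq_zero_iff, ← Nat.mul_div_assoc _ (Nat.gcd_dvd_right ℓ m), mul_comm,
        Nat.mul_div_assoc _ (Nat.gcd_dvd_left ℓ m)]
      exact dvd_mul_right _ _
    have := circGen_mul_circDelta_pow (ℓ := ℓ) i (m / ℓ.gcd m)
    rwa [h, add_zero] at this
  | one => exact Commute.one_left _
  | mul x y _ _ hx hy => exact hx.mul_left hy
  | inv x _ hx => exact hx.inv_left

instance normal_zpowers_circDelta_pow [NeZero m] :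
    (Subgroup.zpowers (circDelta m ℓ ^ (m / ℓ.gcd m))).Normal where
  conj_mem n hn g := by
    obtain ⟨k, rfl⟩ := Subgroup.mem_zpowers_iff.1 hn
    rw [((commute_circDelta_pow g).zpow_right k).eq, mul_inv_cancel_right]
    exact hn

section Sequence

variable {H : Type*} [Group H]

theorem list_prod_telescope (t : ℕ → H) (i p : ℕ) :
    ((List.range p).map fun k => (t (i + k))⁻¹ * t (i + k + 1)).prod = (t i)⁻¹ * t (i + p) := by
  induction p with
  | zero => simp
  | succ p ih => simp [List.range_succ, ih, mul_assoc, ← add_assoc]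

/-- A sequence `t` with `t (i + ℓ) = t i * δ` and `t (i + m) = σ * t i` defines a homomorphism
from `G(m,ℓ)` that sends `a_i` to `(t i)⁻¹ * t (i + 1)`. -/
theorem exists_hom_of_seq [NeZero m] (t : ℕ → H) (δ σ : H) (hδ : ∀ i, t (i + ℓ) = t i * δ)
    (hσ : ∀ i, t (i + m) = σ * t i) :
    ∃ φ : CircularGroup m ℓ →* H,
      (∀ i : ZMod m, φ (circGen m ℓ i) = (t i.val)⁻¹ * t (i.val + 1)) ∧
        φ (circDelta m ℓ) = δ := by
  have hper : Function.Periodic (fun i => (t i)⁻¹ * t (i + 1)) m := by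
    intro i
    simp only [add_right_comm i m 1, hσ]
    group
  have hval (i : ZMod m) (k : ℕ) :
      (t (i + (k : ZMod m)).val)⁻¹ * t ((i + (k : ZMod m)).val + 1) =
        (t (i.val + k))⁻¹ * t (i.val + k + 1) := by
    have := hper.map_mod_nat (i.val + k)
    rwa [← ZMod.val_natCast, Nat.cast_add, ZMod.natCast_zmod_val] at this
  have hword (i : ZMod m) :
      FreeGroup.lift (fun j : ZMod m => (t j.val)⁻¹ * t (j.val + 1)) (circWord m i ℓ) = δ := by
    have h := list_prod_telescope t i.val ℓ
    rw [hδ, inv_mul_cancel_left] at h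
    rw [circWord_eq_prod, map_list_prod, List.map_map, ← h]
    congr 1
    refine List.map_congr_left fun k _ => ?_
    simpa using hval i k
  have hrel : ∀ r ∈ circRels m ℓ,
      FreeGroup.lift (fun j : ZMod m => (t j.val)⁻¹ * t (j.val + 1)) r = 1 := by
    rintro r ⟨i, rfl⟩
    rw [map_mul, map_inv, hword, hword, mul_inv_cancel]
  refine ⟨PresentedGroup.toGroup hrel, fun i => PresentedGroup.toGroup.of hrel, ?_⟩
  rw [circDelta, circS_eq_mk_circWord]
  exact hword 0

/-- The sequence determined by `t (i + ℓ) = t i * δ`, `t (i + m) = σ * t i` and the values `f r`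
for `r < gcd ℓ m`. -/
def circSeq (m ℓ : ℕ) (δ σ : H) (f : ℕ → H) (i : ℕ) : H :=
  σ ^ ((i / ℓ.gcd m : ℕ) * ℓ.gcdB m : ℤ) * f (i % ℓ.gcd m) *
    δ ^ ((i / ℓ.gcd m : ℕ) * ℓ.gcdA m : ℤ)

theorem bezout_div_gcd [NeZero m] :
    ((ℓ / ℓ.gcd m : ℕ) : ℤ) * ℓ.gcdA m + ((m / ℓ.gcd m : ℕ) : ℤ) * ℓ.gcdB m = 1 := by
  have hd : 0 < ℓ.gcd m := Nat.gcd_pos_of_pos_right _ (NeZero.pos m)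
  have h := Nat.gcd_eq_gcd_ab ℓ m
  have h1 : ((ℓ.gcd m : ℕ) : ℤ) * (ℓ / ℓ.gcd m : ℕ) = ℓ := by
    exact_mod_cast Nat.mul_div_cancel' (Nat.gcd_dvd_left ℓ m)
  have h2 : ((ℓ.gcd m : ℕ) : ℤ) * (m / ℓ.gcd m : ℕ) = m := by
    exact_mod_cast Nat.mul_div_cancel' (Nat.gcd_dvd_right ℓ m)
  have hd' : ((ℓ.gcd m : ℕ) : ℤ) ≠ 0 := by exact_mod_cast hd.ne'
  apply mul_left_cancel₀ hd'
  linear_combination -h + h1 * ℓ.gcdA m + h2 * ℓ.gcdB m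

theorem circSeq_add_left [NeZero m] {δ σ : H} (f : ℕ → H) (hδ : δ ^ (m / ℓ.gcd m) = 1)
    (hσ : σ ^ (ℓ / ℓ.gcd m) = 1) (i : ℕ) :
    circSeq m ℓ δ σ f (i + ℓ) = circSeq m ℓ δ σ f i * δ := by
  have hdvd := Nat.gcd_dvd_left ℓ m
  have hσ' : σ ^ ((ℓ / ℓ.gcd m : ℕ) * ℓ.gcdB m : ℤ) = 1 := by
    rw [zpow_mul, zpow_natCast, hσ, one_zpow]
  have hδ' : δ ^ ((ℓ / ℓ.gcd m : ℕ) * ℓ.gcdA m : ℤ) = δ := by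
    rw [eq_sub_of_add_eq (bezout_div_gcd (m := m) (ℓ := ℓ)), zpow_sub, zpow_mul, zpow_natCast, hδ]
    simp
  have hmod : (i + ℓ) % ℓ.gcd m = i % ℓ.gcd m := by
    rw [Nat.add_mod, Nat.mod_eq_zero_of_dvd hdvd, add_zero, Nat.mod_mod]
  rw [circSeq, circSeq, Nat.add_div_of_dvd_left hdvd, hmod]
  push_cast only [Nat.cast_add]
  rw [add_mul, add_mul, zpow_add, zpow_add, hσ', hδ', mul_one, mul_assoc _ _ δ]

theorem circSeq_add_right [NeZero m] {δ σ : H} (f : ℕ → H) (hδ : δ ^ (m / ℓ.gcd m) = 1)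
    (hσ : σ ^ (ℓ / ℓ.gcd m) = 1) (i : ℕ) :
    circSeq m ℓ δ σ f (i + m) = σ * circSeq m ℓ δ σ f i := by
  have hdvd := Nat.gcd_dvd_right ℓ m
  have hδ' : δ ^ ((m / ℓ.gcd m : ℕ) * ℓ.gcdA m : ℤ) = 1 := by
    rw [zpow_mul, zpow_natCast, hδ, one_zpow]
  have hσ' : σ ^ ((m / ℓ.gcd m : ℕ) * ℓ.gcdB m : ℤ) = σ := by
    rw [eq_sub_of_add_eq' (bezout_div_gcd (m := m) (ℓ := ℓ)), zpow_sub, zpow_mul, zpow_natCast, hσ]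
    simp
  have hmod : (i + m) % ℓ.gcd m = i % ℓ.gcd m := by
    rw [Nat.add_mod, Nat.mod_eq_zero_of_dvd hdvd, add_zero, Nat.mod_mod]
  rw [circSeq, circSeq, Nat.add_div_of_dvd_left hdvd, hmod]
  push_cast only [Nat.cast_add]
  rw [add_mul, add_mul, add_comm, zpow_add, add_comm, zpow_add, hσ', hδ', one_mul]
  simp only [mul_assoc]

theorem eq_of_seq_recurrences [NeZero m] [NeZero ℓ] {t u : ℕ → H} {δ σ : H}
    (htδ : ∀ i, t (i + ℓ) = t i * δ) (htσ : ∀ i, t (i + m) = σ * t i)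
    (huδ : ∀ i, u (i + ℓ) = u i * δ) (huσ : ∀ i, u (i + m) = σ * u i)
    (h : ∀ r < ℓ.gcd m, t r = u r) (i : ℕ) : t i = u i := by
  have hd : 0 < ℓ.gcd m := Nat.gcd_pos_of_pos_right _ (NeZero.pos m)
  have hℓ (i k : ℕ) : t (i + k * ℓ) = u (i + k * ℓ) ↔ t i = u i := by
    induction k with
    | zero => simp
    | succ k ih => rw [Nat.succ_mul, ← add_assoc, htδ, huδ, mul_left_inj, ih]
  have hm (i k : ℕ) : t (i + k * m) = u (i + k * m) ↔ t i = u i := by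
    induction k with
    | zero => simp
    | succ k ih => rw [Nat.succ_mul, ← add_assoc, htσ, huσ, mul_right_inj, ih]
  obtain ⟨a, b, hab⟩ : ∃ a b : ℕ, ℓ.gcd m + b * m = a * ℓ := by
    have hbez := Nat.gcd_eq_gcd_ab ℓ m
    have hm1 : (1 : ℤ) ≤ m := by exact_mod_cast NeZero.pos m
    have hℓ1 : (1 : ℤ) ≤ ℓ := by exact_mod_cast NeZero.pos ℓ
    have hA := neg_abs_le (ℓ.gcdA m)
    have hB := le_abs_self (ℓ.gcdB m)
    have hA' := abs_nonneg (ℓ.gcdA m)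
    have hB' := abs_nonneg (ℓ.gcdB m)
    obtain ⟨a, ha⟩ := Int.eq_ofNat_of_zero_le
      (show 0 ≤ ℓ.gcdA m + (|ℓ.gcdA m| + |ℓ.gcdB m|) * m by nlinarith)
    obtain ⟨b, hb⟩ := Int.eq_ofNat_of_zero_le
      (show 0 ≤ -ℓ.gcdB m + (|ℓ.gcdA m| + |ℓ.gcdB m|) * ℓ by nlinarith)
    refine ⟨a, b, ?_⟩
    zify
    linear_combination hbez + (ℓ : ℤ) * ha - (m : ℤ) * hb
  induction i using Nat.strong_induction_on with
  | _ i ih =>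
    by_cases hi : i < ℓ.gcd m
    · exact h i hi
    · have := ih (i - ℓ.gcd m) (by omega)
      rw [← hm i b, show i + b * m = i - ℓ.gcd m + a * ℓ by omega, hℓ]
      exact this

end Sequence

/-- The orders of the cyclic factors of the free product attached to `G(m,ℓ)`, where `0` stands
for an infinite cyclic factor. -/
def circFactorOrder (m ℓ : ℕ) : ℕ → ℕ
  | 0 => m / ℓ.gcd m
  | 1 => ℓ / ℓ.gcd m
  | _ + 2 => 0

/-- A free product of cyclic groups having the central quotient of `G(m,ℓ)` as a retract. -/
abbrev CircFreeProduct (m ℓ : ℕ) :=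
  Monoid.CoprodI fun i => Multiplicative (ZMod (circFactorOrder m ℓ i))

/-- The generator of the `i`-th cyclic factor. -/
def circFactorGen (m ℓ i : ℕ) : CircFreeProduct m ℓ :=
  Monoid.CoprodI.of (i := i) (Multiplicative.ofAdd (1 : ZMod (circFactorOrder m ℓ i)))

theorem circFactorGen_pow (i : ℕ) : circFactorGen m ℓ i ^ circFactorOrder m ℓ i = 1 := by
  rw [circFactorGen, ← map_pow, ← ofAdd_nsmul]
  simp

theorem of_ofAdd_intCast (i : ℕ) (k : ℤ) :
    (Monoid.CoprodI.of (i := i)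
      (Multiplicative.ofAdd (k : ZMod (circFactorOrder m ℓ i))) : CircFreeProduct m ℓ) =
        circFactorGen m ℓ i ^ k := by
  rw [circFactorGen, ← map_zpow, ← ofAdd_zsmul]
  simp

theorem intCast_eq_zero_of_zpow_eq_one {i : ℕ} {k : ℤ} (h : circFactorGen m ℓ i ^ k = 1) :
    (k : ZMod (circFactorOrder m ℓ i)) = 0 := by
  rw [← of_ofAdd_intCast] at h
  exact ofAdd_eq_one.1 ((map_eq_one_iff _ (Monoid.CoprodI.of_injective i)).1 h)

theorem exists_hom_circFreeProduct {Q : Type*} [Group Q] (c : ℕ → Q)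
    (hc : ∀ i, c i ^ circFactorOrder m ℓ i = 1) :
    ∃ ψ : CircFreeProduct m ℓ →* Q, ∀ i, ψ (circFactorGen m ℓ i) = c i := by
  refine ⟨Monoid.CoprodI.lift fun i => AddMonoidHom.toMultiplicativeLeft (ZMod.lift _
    ⟨zmultiplesHom (Additive Q) (Additive.ofMul (c i)), ?_⟩), fun i => ?_⟩
  · rw [zmultiplesHom_apply, natCast_zsmul, ← ofMul_pow, hc, ofMul_one]
  · rw [circFactorGen, Monoid.CoprodI.lift_of]
    have := ZMod.lift_coe (circFactorOrder m ℓ i)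
      ⟨zmultiplesHom (Additive Q) (Additive.ofMul (c i)), by
        rw [zmultiplesHom_apply, natCast_zsmul, ← ofMul_pow, hc, ofMul_one]⟩ 1
    simpa using congrArg Additive.toMul this

/-- `G(m,ℓ)` modulo its central subgroup generated by a power of `Δ` factors through a free
product of cyclic groups. -/
theorem exists_circFreeProduct_retraction [NeZero m] [NeZero ℓ] :
    ∃ (φ : CircularGroup m ℓ →* CircFreeProduct m ℓ)
      (ψ : CircFreeProduct m ℓ →*
        CircularGroup m ℓ ⧸ Subgroup.zpowers (circDelta m ℓ ^ (m / ℓ.gcd m))),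
      φ (circDelta m ℓ) = circFactorGen m ℓ 0 ∧ (∀ x, ψ (φ x) = x) ∧
        ψ (circFactorGen m ℓ 0) = (circDelta m ℓ : CircularGroup m ℓ) ∧
        ψ (circFactorGen m ℓ 1) = (circS m ℓ 0 m : CircularGroup m ℓ) := by
  have hδ : circFactorGen m ℓ 0 ^ (m / ℓ.gcd m) = 1 := circFactorGen_pow 0
  have hσ : circFactorGen m ℓ 1 ^ (ℓ / ℓ.gcd m) = 1 := circFactorGen_pow 1
  obtain ⟨φ, hφ, hφΔ⟩ := exists_hom_of_seq (m := m) (ℓ := ℓ) _ _ _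
    (circSeq_add_left (fun r => circFactorGen m ℓ (r + 2)) hδ hσ)
    (circSeq_add_right (fun r => circFactorGen m ℓ (r + 2)) hδ hσ)
  let q := QuotientGroup.mk' (Subgroup.zpowers (circDelta m ℓ ^ (m / ℓ.gcd m)))
  have hqδ : q (circDelta m ℓ) ^ (m / ℓ.gcd m) = 1 := by
    rw [← map_pow]
    exact (QuotientGroup.eq_one_iff _).2 (Subgroup.mem_zpowers _)
  have hqσ : q (circS m ℓ 0 m) ^ (ℓ / ℓ.gcd m) = 1 := by
    rw [← hqδ, ← map_pow, ← map_pow, circS_period_pow_eq_circDelta_pow]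
  obtain ⟨ψ, hψ⟩ := exists_hom_circFreeProduct (m := m) (ℓ := ℓ)
    (fun | 0 => q (circDelta m ℓ) | 1 => q (circS m ℓ 0 m) | r + 2 => q (circS m ℓ 0 r)) (by
      rintro (_ | _ | r)
      exacts [hqδ, hqσ, pow_zero _])
  have hψ0 : ψ (circFactorGen m ℓ 0) = q (circDelta m ℓ) := hψ 0
  have hψ1 : ψ (circFactorGen m ℓ 1) = q (circS m ℓ 0 m) := hψ 1
  have hseq := eq_of_seq_recurrences (m := m) (ℓ := ℓ)
    (t := fun i => ψ (circSeq m ℓ (circFactorGen m ℓ 0) (circFactorGen m ℓ 1)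
      (fun r => circFactorGen m ℓ (r + 2)) i))
    (u := fun i => q (circS m ℓ 0 i)) (δ := q (circDelta m ℓ)) (σ := q (circS m ℓ 0 m))
    (fun i => by rw [circSeq_add_left _ hδ hσ, map_mul, hψ0])
    (fun i => by rw [circSeq_add_right _ hδ hσ, map_mul, hψ1])
    (fun i => by rw [circS_mul_circDelta, map_mul])
    (fun i => by rw [circS_add_period, map_mul])
    (fun r hr => by
      simp only [circSeq, Nat.div_eq_of_lt hr, Nat.mod_eq_of_lt hr]
      simpa using hψ (r + 2))
  refine ⟨φ, ψ, hφΔ, fun x => ?_, hψ0, hψ1⟩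
  have hcomp : ψ.comp φ = q := by
    refine PresentedGroup.ext fun i => ?_
    change ψ (φ (circGen m ℓ i)) = q (circGen m ℓ i)
    rw [hφ, map_mul, map_inv]
    refine (congrArg₂ (fun a b => a⁻¹ * b) (hseq _) (hseq _)).trans ?_
    rw [circS_succ, map_mul, inv_mul_cancel_left, zero_add, ZMod.natCast_zmod_val]
  exact DFunLike.congr_fun hcomp x

end Circular

/-- Every periodic element of `G(m,ℓ)` is conjugate to an integer power of `s(0,m)`
or to an integer power of `Δ`. -/
theorem periodic_conjugate_to_power (m ℓ : ℕ) (hm : 0 < m) (hℓ : 0 < ℓ)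
    (x : CircularGroup m ℓ) (hx : CircIsPeriodic m ℓ x) :
    (∃ n : ℤ, IsConj x ((circS m ℓ 0 m) ^ n)) ∨ (∃ n : ℤ, IsConj x ((circDelta m ℓ) ^ n)) := by
  have : NeZero m := ⟨hm.ne'⟩
  have : NeZero ℓ := ⟨hℓ.ne'⟩
  obtain ⟨φ, ψ, hφΔ, hψφ, hψ0, hψ1⟩ := exists_circFreeProduct_retraction (m := m) (ℓ := ℓ)
  obtain ⟨a, ha, b, hab⟩ := hx
  have hm' : 0 < m / ℓ.gcd m :=
    Nat.div_pos (Nat.le_of_dvd hm (Nat.gcd_dvd_right _ _)) (Nat.gcd_pos_of_pos_right _ hm)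
  have hfin : IsOfFinOrder (φ x) := by
    refine isOfFinOrder_iff_zpow_eq_one.2 ⟨a * (m / ℓ.gcd m : ℕ), ?_, ?_⟩
    · exact mul_ne_zero ha (by exact_mod_cast hm'.ne')
    · rw [zpow_mul, ← map_zpow, hab, map_zpow, hφΔ, ← zpow_mul, mul_comm, zpow_mul, zpow_natCast,
        show circFactorGen m ℓ 0 ^ (m / ℓ.gcd m) = 1 from circFactorGen_pow 0, one_zpow]
  obtain ⟨i, g, hg⟩ := Monoid.CoprodI.exists_isConj_of_isOfFinOrder hfin
  obtain ⟨c, hc⟩ := isConj_iff.1 hg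
  obtain ⟨k, rfl⟩ : ∃ k : ℤ, g = Multiplicative.ofAdd (k : ZMod (circFactorOrder m ℓ i)) :=
    (ZMod.intCast_surjective (Multiplicative.toAdd g)).imp fun k hk => by rw [hk, ofAdd_toAdd]
  obtain ⟨y, hy⟩ := QuotientGroup.mk_surjective (ψ c)
  -- Conjugates that agree modulo the central subgroup differ by a power of its generator.
  have hlift {z : CircularGroup m ℓ}
      (hz : ψ (circFactorGen m ℓ i ^ k) = (z : CircularGroup m ℓ ⧸
        Subgroup.zpowers (circDelta m ℓ ^ (m / ℓ.gcd m)))) :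
      ∃ j : ℤ, IsConj x (z * (circDelta m ℓ ^ (m / ℓ.gcd m)) ^ j) := by
    have h := congrArg ψ hc
    rw [of_ofAdd_intCast, hz, map_mul, map_mul, map_inv, hψφ, ← hy, ← QuotientGroup.mk_inv,
      ← QuotientGroup.mk_mul, ← QuotientGroup.mk_mul, eq_comm, QuotientGroup.eq] at h
    obtain ⟨j, hj⟩ := Subgroup.mem_zpowers_iff.1 h
    exact ⟨j, isConj_iff.2 ⟨y, by rw [hj, mul_inv_cancel_left]⟩⟩
  match i with
  | 0 =>
    obtain ⟨j, hj⟩ := hlift (z := circDelta m ℓ ^ k) (by rw [map_zpow, hψ0, QuotientGroup.mk_zpow])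
    rw [← zpow_natCast, ← zpow_mul, ← zpow_add] at hj
    exact Or.inr ⟨_, hj⟩
  | 1 =>
    obtain ⟨j, hj⟩ := hlift (z := circS m ℓ 0 m ^ k) (by rw [map_zpow, hψ1, QuotientGroup.mk_zpow])
    rw [← circS_period_pow_eq_circDelta_pow, ← zpow_natCast, ← zpow_mul, ← zpow_add] at hj
    exact Or.inl ⟨_, hj⟩
  | r + 2 =>
    have hk : k = 0 := by
      obtain ⟨n, hn, hpow⟩ := isOfFinOrder_iff_pow_eq_one.1 hfin
      have h : circFactorGen m ℓ (r + 2) ^ (k * n) = 1 := by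
        rw [zpow_mul, zpow_natCast, ← of_ofAdd_intCast, ← hc, conj_pow, hpow, mul_one,
          mul_inv_cancel]
      have h' : k * n = 0 :=
        Int.zero_dvd.1 ((ZMod.intCast_zmod_eq_zero_iff_dvd _ 0).1 (intCast_eq_zero_of_zpow_eq_one h))
      exact (mul_eq_zero.1 h').resolve_right (by exact_mod_cast hn.ne')
    obtain ⟨j, hj⟩ := hlift (z := 1) (by rw [hk, zpow_zero, map_one, QuotientGroup.mk_one])
    rw [one_mul, ← zpow_natCast, ← zpow_mul] at hj
    exact Or.inr ⟨_, hj⟩
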